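/- For real $\nu\ge 0$ and $z\ge 0$ let $J_\nu(z)=\sum_{m=0}^\infty \frac{(-1)^m}{m!\,\Gamma(\nu+m+1)}\left(\frac z2\right)^{\nu+2m}$ be the Bessel function of the first kind of order $\nu$, and let $J_\nu'$ be its derivative with respect to $z$. For $\nu>0$ let $j'_{\nu,1}<j'_{\nu,2}<\cdots$ be the positive zeroes of $J_\nu'$ in increasing order; for $\nu=0$ let $j'_{0,1}<j'_{0,2}<\cdots$ be the nonnegative zeroes of $J_0'$ in increasing order, so that, by the usual convention, the zero $z=0$ is counted as $j'_{0,1}=0$. Let $\nu$ be a real number with $\nu\ge 1$. For every integer $k\ge 1$ one has $$j'_{\nu,k+1}<j'_{\nu-1,k+2}<j'_{\nu,k+2};$$ that is, the zeroes of the derivatives $J_{\nu-1}'$ and $J_\nu'$ of Bessel functions of the first kind of consecutive orders are interlaced in the same way as the positive zeroes of the Bessel functions themselves. -/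

import Mathlib

/-- Bessel function of the first kind of real order `ν`, defined via its power series
`J_ν(z) = ∑ₘ (−1)^m / (m! Γ(ν+m+1)) (z/2)^(ν+2m)` (with real-exponent powers). -/
noncomputable def besselJ (ν z : ℝ) : ℝ :=
  ∑' m : ℕ, ((-1 : ℝ) ^ m / (Nat.factorial m * Real.Gamma (ν + m + 1))) *
    (z / 2) ^ (ν + 2 * (m : ℝ))

/-- The zeroes of `J_ν′` that are counted by the sequence `j′_{ν,1} < j′_{ν,2} < ⋯`: the
positive ones and, for the order `ν = 0` only, also the zero `z = 0` of `J_0′`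
(the usual convention `j′_{0,1} = 0`). -/
def besselJDerivZeros (ν : ℝ) : Set ℝ :=
  {z : ℝ | (0 < z ∨ (ν = 0 ∧ z = 0)) ∧ deriv (besselJ ν) z = 0}

/-- `x` (indexed by `k ≥ 1`; the value `x 0` is irrelevant) is the sequence `k ↦ j′_{ν,k}`:
it is strictly increasing on the indices `k ≥ 1` and its values there are exactly the elements
of `besselJDerivZeros ν`. -/
def EnumBesselJDerivZeros (ν : ℝ) (x : ℕ → ℝ) : Prop :=
  StrictMonoOn x (Set.Ici 1) ∧ (∀ k, 1 ≤ k → x k ∈ besselJDerivZeros ν) ∧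
    ∀ z ∈ besselJDerivZeros ν, ∃ k, 1 ≤ k ∧ x k = z

/-! Let `P = J_ν′ J_{ν+1}′` with `ν ≥ 0`. The recurrences between `J_ν` and `J_{ν+1}` and Bessel's
equation give `P′ = -(1 - ν²/z²)(1 - ν(ν+1)/z²) J_ν²` at a positive zero of `J_ν′` and
`P′ = (1 - (ν+1)²/z²)(1 - ν(ν+1)/z²) J_{ν+1}²` at a positive zero of `J_{ν+1}′`. Every positive
zero of `J_ν′` satisfies `z² > ν(ν+1)`, so `P` decreases through the former and increases through
the latter. Two consecutive zeroes of one factor are therefore separated by a zero of the other.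
The sign of `P` near `0` shows that the first zero belongs to `J_ν′`: for `ν > 0`, `P` is positive
there; for `ν = 0` it is negative, so that the zero `0` of `J_0′` behaves like the positive ones. -/

open Filter Topology Set

section PowerSeries

variable {𝕜 : Type*} [RCLike 𝕜] {a : ℕ → 𝕜}

theorem hasDerivAt_tsum_mul_pow (ha : ∀ x, Summable fun m => a m * x ^ m) (x : 𝕜) :
    HasDerivAt (fun y => ∑' m, a m * y ^ m) (∑' m : ℕ, a m * (m * x ^ (m - 1))) x := by
  set R : ℝ := ‖x‖ + 1
  have hR : 1 ≤ R := le_add_of_nonneg_left (norm_nonneg x)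
  have hxR : x ∈ Metric.ball 0 R := by simp [R]
  have hu : Summable fun m => ‖a m‖ * (2 * R) ^ m :=
    (summable_norm_iff.2 (ha ((2 * R : ℝ) : 𝕜))).congr fun m => by
      rw [norm_mul, norm_pow, RCLike.norm_of_nonneg (by positivity)]
  refine hasDerivAt_tsum_of_isPreconnected hu Metric.isOpen_ball
    (convex_ball 0 R).isPreconnected (fun m y _ => (hasDerivAt_pow m y).const_mul (a m))
    (fun m y hy => ?_) hxR (ha x) hxR
  have hy : ‖y‖ ≤ R := (mem_ball_zero_iff.1 hy).le
  have hm : (m : ℝ) ≤ 2 ^ m := mod_cast Nat.lt_two_pow_self.le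
  rw [norm_mul, norm_mul, norm_pow, RCLike.norm_natCast, mul_pow]
  gcongr
  calc ‖y‖ ^ (m - 1) ≤ R ^ (m - 1) := by gcongr
    _ ≤ R ^ m := pow_le_pow_right₀ hR (m.sub_le 1)

end PowerSeries

section SignChanges

variable {f : ℝ → ℝ} {a b : ℝ}

theorem exists_mem_Ioo_eq_zero_of_eventually_neg_of_eventually_pos (hab : a < b)
    (hf : ContinuousOn f (Ioo a b)) (ha : ∀ᶠ x in 𝓝[>] a, f x < 0)
    (hb : ∀ᶠ x in 𝓝[<] b, 0 < f x) : ∃ x ∈ Ioo a b, f x = 0 :=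
  isPreconnected_Ioo.intermediate_value₂_eventually₂ (le_principal_iff.2 (Ioo_mem_nhdsGT hab))
    (le_principal_iff.2 (Ioo_mem_nhdsLT hab)) hf continuousOn_const
    (ha.mono fun _ => le_of_lt) (hb.mono fun _ => le_of_lt)

theorem exists_mem_Ioo_eq_zero_of_eventually_pos_of_eventually_neg (hab : a < b)
    (hf : ContinuousOn f (Ioo a b)) (ha : ∀ᶠ x in 𝓝[>] a, 0 < f x)
    (hb : ∀ᶠ x in 𝓝[<] b, f x < 0) : ∃ x ∈ Ioo a b, f x = 0 := by
  simpa using exists_mem_Ioo_eq_zero_of_eventually_neg_of_eventually_pos hab hf.neg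
    (ha.mono fun _ => neg_neg_of_pos) (hb.mono fun _ => neg_pos.2)

theorem pos_of_hasDerivAt_nonneg_of_eventually_pos {f' : ℝ → ℝ} (hab : a < b)
    (hf : ∀ x ∈ Ioc a b, HasDerivAt f (f' x) x) (hf' : ∀ x ∈ Ioo a b, 0 ≤ f' x)
    (ha : ∀ᶠ x in 𝓝[>] a, 0 < f x) : 0 < f b := by
  have hmono : MonotoneOn f (Ioc a b) := by
    refine monotoneOn_of_hasDerivWithinAt_nonneg (f' := f') (convex_Ioc a b)
      (fun x hx => (hf x hx).continuousAt.continuousWithinAt) ?_ ?_ <;> rw [interior_Ioc]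
    exacts [fun x hx => (hf x (Ioo_subset_Ioc_self hx)).hasDerivWithinAt, hf']
  obtain ⟨w, hw, hwab⟩ := (ha.and (Ioo_mem_nhdsGT hab)).exists
  exact hw.trans_le (hmono (Ioo_subset_Ioc_self hwab) ⟨hab, le_rfl⟩ hwab.2.le)

theorem eventually_neg_and_eventually_pos_of_hasDerivAt_pos {f' x : ℝ}
    (hf : HasDerivAt f f' x) (hf' : 0 < f') (hx : f x = 0) :
    (∀ᶠ y in 𝓝[<] x, f y < 0) ∧ ∀ᶠ y in 𝓝[>] x, 0 < f y := by
  have hsign := eventually_nhdsWithin_sign_eq_of_deriv_pos (hf.deriv ▸ hf') hx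
  constructor
  · filter_upwards [nhdsWithin_le_nhds hsign, self_mem_nhdsWithin] with y hy hyx
    rwa [sign_neg (sub_neg.2 hyx), sign_eq_neg_one_iff] at hy
  · filter_upwards [nhdsWithin_le_nhds hsign, self_mem_nhdsWithin] with y hy hxy
    rwa [sign_pos (sub_pos.2 hxy), sign_eq_one_iff] at hy

theorem eventually_pos_and_eventually_neg_of_hasDerivAt_neg {f' x : ℝ}
    (hf : HasDerivAt f f' x) (hf' : f' < 0) (hx : f x = 0) :
    (∀ᶠ y in 𝓝[<] x, 0 < f y) ∧ ∀ᶠ y in 𝓝[>] x, f y < 0 := by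
  simpa using eventually_neg_and_eventually_pos_of_hasDerivAt_pos hf.neg (neg_pos.2 hf')
    (neg_eq_zero.2 hx)

end SignChanges

section Interlacing

theorem lt_and_lt_succ_of_exists_between {α : Type*} [LinearOrder α] {x y : ℕ → α}
    (hx : StrictMonoOn x (Ici 1)) (hy : StrictMonoOn y (Ici 1))
    (hxy : ∀ k, 1 ≤ k → ∃ j, 1 ≤ j ∧ y j ∈ Ioo (x k) (x (k + 1)))
    (hyx : ∀ k, 1 ≤ k → ∃ j, 1 ≤ j ∧ x j ∈ Ioo (y k) (y (k + 1)))
    (h1 : ∃ j, 1 ≤ j ∧ x j < y 1) {k : ℕ} (hk : 1 ≤ k) : x k < y k ∧ y k < x (k + 1) := by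
  induction k, hk using Nat.le_induction with
  | base =>
    obtain ⟨i, hi, hxi⟩ := h1
    obtain ⟨j, hj, -, hyj⟩ := hxy 1 le_rfl
    exact ⟨(hx.monotoneOn self_mem_Ici hi hi).trans_lt hxi,
      (hy.monotoneOn self_mem_Ici hj hj).trans_lt hyj⟩
  | succ k hk ih =>
    have hk' : 1 ≤ k + 1 := hk.trans k.le_succ
    obtain ⟨i, hi, hyi, hiy⟩ := hyx k hk
    obtain ⟨j, hj, hxj, hjx⟩ := hxy (k + 1) hk'
    have hki : k < i := (hx.lt_iff_lt hk hi).1 (ih.1.trans hyi)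
    have hkj : k < j := (hy.lt_iff_lt hk hj).1 (ih.2.trans hxj)
    exact ⟨(hx.monotoneOn hk' hi hki).trans_lt hiy, (hy.monotoneOn hk' hj hkj).trans_lt hjx⟩

end Interlacing

section BesselClifford

/-- The coefficients `1 / (m! Γ(ν+m+1))` of the Bessel–Clifford function. Since `Real.Gamma`
vanishes at its poles and `0⁻¹ = 0`, this is the correct value for every real `ν`. -/
noncomputable def besselCliffordCoeff (ν : ℝ) (m : ℕ) : ℝ :=
  (m.factorial * Real.Gamma (ν + m + 1))⁻¹

/-- The Bessel–Clifford function `C_ν(x) = ∑ₘ x^m / (m! Γ(ν+m+1))`, the entire function with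
`J_ν(z) = (z/2)^ν C_ν(-(z/2)²)`. -/
noncomputable def besselClifford (ν x : ℝ) : ℝ := ∑' m, besselCliffordCoeff ν m * x ^ m

theorem succ_mul_besselCliffordCoeff_succ (ν : ℝ) (m : ℕ) :
    (m + 1) * besselCliffordCoeff ν (m + 1) = besselCliffordCoeff (ν + 1) m := by
  have hm : (m + 1 : ℝ) ≠ 0 := m.cast_add_one_ne_zero
  rw [besselCliffordCoeff, besselCliffordCoeff, Nat.factorial_succ, Nat.cast_mul, Nat.cast_succ,
    show ν + (m + 1) + 1 = ν + 1 + m + 1 by ring, mul_assoc, mul_inv, mul_inv_cancel_left₀ hm]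

theorem mul_besselCliffordCoeff_add_one (ν : ℝ) (m : ℕ) :
    (ν + m + 1) * besselCliffordCoeff (ν + 1) m = besselCliffordCoeff ν m := by
  rw [besselCliffordCoeff, besselCliffordCoeff, show ν + 1 + m + 1 = ν + m + 1 + 1 by ring]
  rcases eq_or_ne (ν + m + 1) 0 with h | h
  · simp [h]
  · rw [Real.Gamma_add_one h]
    field_simp

theorem summable_besselCliffordCoeff_mul_pow (ν x : ℝ) :
    Summable fun m => besselCliffordCoeff ν m * x ^ m := by
  refine summable_of_ratio_norm_eventually_le one_half_lt_one ?_
  filter_upwards [eventually_ge_atTop ⌈|ν| + 2 * |x|⌉₊] with m hm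
  have hm : |ν| + 2 * |x| ≤ m := Nat.ceil_le.1 hm
  have hx : 2 * |x| ≤ (ν + m + 1) * (m + 1) := by
    nlinarith [neg_abs_le ν, abs_nonneg ν, abs_nonneg x]
  have hcoeff : besselCliffordCoeff ν m =
      (ν + m + 1) * (m + 1) * besselCliffordCoeff ν (m + 1) := by
    rw [mul_assoc, succ_mul_besselCliffordCoeff_succ, mul_besselCliffordCoeff_add_one]
  rw [hcoeff, pow_succ, norm_mul, norm_mul, norm_mul, norm_mul, Real.norm_eq_abs x,
    Real.norm_of_nonneg ((mul_nonneg zero_le_two (abs_nonneg x)).trans hx)]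
  calc ‖besselCliffordCoeff ν (m + 1)‖ * (‖x ^ m‖ * |x|)
      = 1 / 2 * (2 * |x| * ‖besselCliffordCoeff ν (m + 1)‖ * ‖x ^ m‖) := by ring
    _ ≤ _ := by gcongr

theorem hasDerivAt_besselClifford (ν x : ℝ) :
    HasDerivAt (besselClifford ν) (besselClifford (ν + 1) x) x := by
  refine (hasDerivAt_tsum_mul_pow (summable_besselCliffordCoeff_mul_pow ν) x).congr_deriv ?_
  have hterm (m : ℕ) : besselCliffordCoeff ν (m + 1) * ((m + 1 : ℕ) * x ^ (m + 1 - 1)) =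
      besselCliffordCoeff (ν + 1) m * x ^ m := by
    rw [← succ_mul_besselCliffordCoeff_succ, Nat.cast_succ, Nat.add_sub_cancel]
    ring
  rw [tsum_eq_zero_add' (by simpa only [hterm] using summable_besselCliffordCoeff_mul_pow _ x)]
  simp only [hterm, Nat.cast_zero, zero_mul, mul_zero, zero_add, besselClifford]

theorem continuous_besselClifford (ν : ℝ) : Continuous (besselClifford ν) :=
  continuous_iff_continuousAt.2 fun x => (hasDerivAt_besselClifford ν x).continuousAt

theorem besselClifford_eq_add (ν x : ℝ) :
    besselClifford ν x = (ν + 1) * besselClifford (ν + 1) x + x * besselClifford (ν + 2) x := by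
  have hsum (μ : ℝ) : HasSum (fun m => besselCliffordCoeff μ m * x ^ m) (besselClifford μ x) :=
    (summable_besselCliffordCoeff_mul_pow μ x).hasSum
  have hshift : HasSum (fun m : ℕ => m * besselCliffordCoeff (ν + 1) m * x ^ m)
      (x * besselClifford (ν + 2) x) := by
    rw [← hasSum_nat_add_iff' 1]
    simp only [Finset.range_one, Finset.sum_singleton, Nat.cast_zero, zero_mul, sub_zero]
    refine ((hsum (ν + 2)).mul_left x).congr_fun fun m => ?_
    rw [Nat.cast_succ, succ_mul_besselCliffordCoeff_succ, add_assoc, one_add_one_eq_two]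
    ring
  refine (hsum ν).unique ((((hsum (ν + 1)).mul_left (ν + 1)).add hshift).congr_fun fun m => ?_)
  rw [← mul_besselCliffordCoeff_add_one]
  ring

theorem besselClifford_zero_pos {ν : ℝ} (hν : -1 < ν) : 0 < besselClifford ν 0 := by
  have h : besselClifford ν 0 = (Real.Gamma (ν + 1))⁻¹ := by
    rw [besselClifford, tsum_eq_single 0 fun m hm => by simp [hm]]
    simp [besselCliffordCoeff]
  exact h ▸ inv_pos.2 (Real.Gamma_pos_of_pos (by linarith))

end BesselClifford

section BesselJ

variable {ν z : ℝ}

theorem besselJ_eq_rpow_mul_besselClifford (ν : ℝ) (hz : 0 < z) :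
    besselJ ν z = (z / 2) ^ ν * besselClifford ν (-(z / 2) ^ 2) := by
  rw [besselJ, besselClifford, ← tsum_mul_left]
  refine tsum_congr fun m => ?_
  have hpow : (z / 2) ^ (ν + 2 * m) = (z / 2) ^ ν * ((z / 2) ^ 2) ^ m := by
    rw [Real.rpow_add (half_pos hz), Real.rpow_mul (half_pos hz).le, Real.rpow_two,
      Real.rpow_natCast]
  rw [hpow, besselCliffordCoeff, neg_pow ((z / 2) ^ 2)]
  ring

theorem besselJ_add_besselJ_add_two (ν : ℝ) (hz : 0 < z) :
    besselJ ν z + besselJ (ν + 2) z = 2 * (ν + 1) / z * besselJ (ν + 1) z := by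
  rw [besselJ_eq_rpow_mul_besselClifford ν hz, besselJ_eq_rpow_mul_besselClifford (ν + 1) hz,
    besselJ_eq_rpow_mul_besselClifford (ν + 2) hz, Real.rpow_add_one (half_pos hz).ne',
    Real.rpow_add (half_pos hz), Real.rpow_two, besselClifford_eq_add]
  field_simp
  ring

theorem hasDerivAt_besselJ (ν : ℝ) (hz : 0 < z) :
    HasDerivAt (besselJ ν) (ν / z * besselJ ν z - besselJ (ν + 1) z) z := by
  have hhalf : HasDerivAt (fun y : ℝ => y / 2) (1 / 2) z := (hasDerivAt_id z).div_const 2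
  have hprod := (hhalf.rpow_const (p := ν) (.inl (half_pos hz).ne')).mul
    ((hasDerivAt_besselClifford ν _).comp z (hhalf.pow 2).neg)
  have heq : besselJ ν =ᶠ[𝓝 z] fun y => (y / 2) ^ ν * besselClifford ν (-(y / 2) ^ 2) := by
    filter_upwards [lt_mem_nhds hz] with y hy using besselJ_eq_rpow_mul_besselClifford ν hy
  refine (hprod.congr_of_eventuallyEq heq).congr_deriv ?_
  simp only [Function.comp_apply, Pi.neg_apply, Pi.pow_apply]
  rw [besselJ_eq_rpow_mul_besselClifford ν hz, besselJ_eq_rpow_mul_besselClifford (ν + 1) hz,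
    Real.rpow_add_one (half_pos hz).ne', Real.rpow_sub_one (half_pos hz).ne']
  field_simp
  ring

theorem hasDerivAt_besselJ_add_one (ν : ℝ) (hz : 0 < z) :
    HasDerivAt (besselJ (ν + 1)) (besselJ ν z - (ν + 1) / z * besselJ (ν + 1) z) z := by
  refine (hasDerivAt_besselJ (ν + 1) hz).congr_deriv ?_
  rw [add_assoc, one_add_one_eq_two]
  linear_combination -besselJ_add_besselJ_add_two ν hz

theorem hasDerivAt_deriv_besselJ (ν : ℝ) (hz : 0 < z) :
    HasDerivAt (deriv (besselJ ν))
      (-deriv (besselJ ν) z / z - (1 - ν ^ 2 / z ^ 2) * besselJ ν z) z := by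
  have heq : deriv (besselJ ν) =ᶠ[𝓝 z] fun y => ν / y * besselJ ν y - besselJ (ν + 1) y := by
    filter_upwards [lt_mem_nhds hz] with y hy using (hasDerivAt_besselJ ν hy).deriv
  have hdiv : HasDerivAt (fun y => ν / y) (-(ν / z ^ 2)) z :=
    ((hasDerivAt_inv hz.ne').const_mul ν).congr_deriv (by ring)
  refine ((((hdiv.mul (hasDerivAt_besselJ ν hz)).sub
    (hasDerivAt_besselJ_add_one ν hz))).congr_of_eventuallyEq heq).congr_deriv ?_
  rw [(hasDerivAt_besselJ ν hz).deriv]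
  field_simp
  ring

theorem besselJ_zero_neg (z : ℝ) : besselJ 0 (-z) = besselJ 0 z := by
  refine tsum_congr fun m => ?_
  have heven : (0 : ℝ) + 2 * m = (2 * m : ℕ) := by push_cast; ring
  rw [heven, Real.rpow_natCast, Real.rpow_natCast, neg_div, (even_two_mul m).neg_pow]

theorem deriv_besselJ_zero_zero : deriv (besselJ 0) 0 = 0 := by
  have h := deriv_comp_neg (besselJ 0) 0
  simp only [besselJ_zero_neg, neg_zero] at h
  exact self_eq_neg.1 h

theorem eventually_besselJ_pos (hν : -1 < ν) : ∀ᶠ z in 𝓝[>] 0, 0 < besselJ ν z := by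
  have hcont : Continuous fun z : ℝ => besselClifford ν (-(z / 2) ^ 2) :=
    (continuous_besselClifford ν).comp (by fun_prop)
  have hzero : 0 < besselClifford ν (-((0 : ℝ) / 2) ^ 2) := by
    simpa using besselClifford_zero_pos hν
  filter_upwards [nhdsWithin_le_nhds (hcont.continuousAt.eventually_const_lt hzero),
    self_mem_nhdsWithin] with z hpos hz
  rw [besselJ_eq_rpow_mul_besselClifford ν hz]
  exact mul_pos (Real.rpow_pos_of_pos (half_pos hz) ν) hpos

theorem eventually_deriv_besselJ_pos (hν : 0 < ν) :
    ∀ᶠ z in 𝓝[>] 0, 0 < deriv (besselJ ν) z := by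
  have hcont : Continuous fun z : ℝ => ν * besselClifford ν (-(z / 2) ^ 2) -
      z ^ 2 / 2 * besselClifford (ν + 1) (-(z / 2) ^ 2) := by
    have (μ : ℝ) := continuous_besselClifford μ
    fun_prop
  have hzero : 0 < ν * besselClifford ν (-((0 : ℝ) / 2) ^ 2) -
      0 ^ 2 / 2 * besselClifford (ν + 1) (-(0 / 2) ^ 2) := by
    simpa using mul_pos hν (besselClifford_zero_pos (neg_one_lt_zero.trans hν))
  filter_upwards [nhdsWithin_le_nhds (hcont.continuousAt.eventually_const_lt hzero),
    self_mem_nhdsWithin] with z hpos (hz : 0 < z)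
  have hderiv : deriv (besselJ ν) z = (z / 2) ^ ν / z * (ν * besselClifford ν (-(z / 2) ^ 2) -
      z ^ 2 / 2 * besselClifford (ν + 1) (-(z / 2) ^ 2)) := by
    rw [(hasDerivAt_besselJ ν hz).deriv, besselJ_eq_rpow_mul_besselClifford ν hz,
      besselJ_eq_rpow_mul_besselClifford (ν + 1) hz, Real.rpow_add_one (half_pos hz).ne']
    field_simp
  rw [hderiv]
  exact mul_pos (div_pos (Real.rpow_pos_of_pos (half_pos hz) ν) hz) hpos

theorem besselJ_mul_deriv_besselJ_pos (hz : 0 < z) (hzν : z ≤ ν) :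
    0 < besselJ ν z * deriv (besselJ ν) z := by
  have hν : 0 < ν := hz.trans_le hzν
  have hderiv (x : ℝ) (hx : x ∈ Ioc 0 z) :
      HasDerivAt (fun x => x * (besselJ ν x * deriv (besselJ ν) x))
        (x * deriv (besselJ ν) x ^ 2 + (ν ^ 2 - x ^ 2) / x * besselJ ν x ^ 2) x := by
    have hJ := hasDerivAt_besselJ ν hx.1
    rw [← hJ.deriv] at hJ
    refine ((hasDerivAt_id x).mul (hJ.mul (hasDerivAt_deriv_besselJ ν hx.1))).congr_deriv ?_
    have := hx.1.ne'
    simp only [Pi.mul_apply, id_eq]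
    field_simp
    ring
  have hnonneg (x : ℝ) (hx : x ∈ Ioo 0 z) :
      0 ≤ x * deriv (besselJ ν) x ^ 2 + (ν ^ 2 - x ^ 2) / x * besselJ ν x ^ 2 := by
    have hxν : x ^ 2 ≤ ν ^ 2 := pow_le_pow_left₀ hx.1.le (hx.2.le.trans hzν) 2
    have := div_nonneg (sub_nonneg.2 hxν) hx.1.le
    have := hx.1
    positivity
  have hnear : ∀ᶠ x in 𝓝[>] 0, 0 < x * (besselJ ν x * deriv (besselJ ν) x) := by
    filter_upwards [eventually_besselJ_pos (neg_one_lt_zero.trans hν),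
      eventually_deriv_besselJ_pos hν, self_mem_nhdsWithin] with x hJ hJ' hx
    exact mul_pos hx (mul_pos hJ hJ')
  exact pos_of_mul_pos_right
    (pos_of_hasDerivAt_nonneg_of_eventually_pos hz hderiv hnonneg hnear :) hz.le

theorem besselJ_sq_add_besselJ_add_one_sq_pos (hν : -1 < ν) (hz : 0 < z) :
    0 < besselJ ν z ^ 2 + besselJ (ν + 1) z ^ 2 := by
  set c : ℝ := 2 * (|ν| + 1)
  have hc : 0 ≤ c + 2 * ν := by simp only [c]; linarith [neg_abs_le ν]
  have hc' : 0 ≤ c - 2 * (ν + 1) := by simp only [c]; linarith [le_abs_self ν]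
  have hderiv (x : ℝ) (hx : x ∈ Ioc 0 z) :
      HasDerivAt (fun x => x ^ c * (besselJ ν x ^ 2 + besselJ (ν + 1) x ^ 2))
        (x ^ c / x * ((c + 2 * ν) * besselJ ν x ^ 2 +
          (c - 2 * (ν + 1)) * besselJ (ν + 1) x ^ 2)) x := by
    refine ((Real.hasDerivAt_rpow_const (.inl hx.1.ne')).mul
      (((hasDerivAt_besselJ ν hx.1).pow 2).add
        ((hasDerivAt_besselJ_add_one ν hx.1).pow 2))).congr_deriv ?_
    have := hx.1.ne'
    rw [Real.rpow_sub_one this]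
    simp only [Pi.add_apply, Pi.pow_apply]
    field_simp
    ring
  have hnonneg (x : ℝ) (hx : x ∈ Ioo 0 z) : 0 ≤ x ^ c / x *
      ((c + 2 * ν) * besselJ ν x ^ 2 + (c - 2 * (ν + 1)) * besselJ (ν + 1) x ^ 2) := by
    have := hx.1
    positivity
  have hnear : ∀ᶠ x in 𝓝[>] 0, 0 < x ^ c * (besselJ ν x ^ 2 + besselJ (ν + 1) x ^ 2) := by
    filter_upwards [eventually_besselJ_pos hν, self_mem_nhdsWithin] with x hJ (hx : 0 < x)
    positivity
  exact pos_of_mul_pos_right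
    (pos_of_hasDerivAt_nonneg_of_eventually_pos hz hderiv hnonneg hnear :)
    (Real.rpow_nonneg hz.le c)

theorem besselJ_ne_zero_of_deriv_eq_zero (hν : -1 < ν) (hz : 0 < z)
    (h : deriv (besselJ ν) z = 0) : besselJ ν z ≠ 0 := by
  intro hJ
  have hJ' : besselJ (ν + 1) z = 0 := by
    simpa [hJ, h] using (hasDerivAt_besselJ ν hz).deriv.symm
  simpa [hJ, hJ'] using besselJ_sq_add_besselJ_add_one_sq_pos hν hz

theorem mul_add_one_lt_sq_of_deriv_besselJ_eq_zero (hν : -1 < ν) (hz : 0 < z)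
    (h : deriv (besselJ ν) z = 0) : ν * (ν + 1) < z ^ 2 := by
  -- At `z`, the product `J_{ν+1} J_{ν+1}′` is a nonnegative multiple of `z² - ν(ν+1)`, but it is
  -- positive on `(0, ν + 1]`.
  by_contra! hle
  have hzν : z ≤ ν + 1 := by nlinarith
  have hJ : besselJ (ν + 1) z = ν / z * besselJ ν z := by
    linarith [(hasDerivAt_besselJ ν hz).deriv]
  have hpos := besselJ_mul_deriv_besselJ_pos hz hzν
  rw [(hasDerivAt_besselJ_add_one ν hz).deriv, hJ] at hpos
  have hν0 : 0 ≤ ν := by nlinarith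
  have hnonpos : ν / z ^ 3 * besselJ ν z ^ 2 * (z ^ 2 - ν * (ν + 1)) ≤ 0 :=
    mul_nonpos_of_nonneg_of_nonpos (by positivity) (sub_nonpos.2 hle)
  refine hpos.not_ge (le_of_eq_of_le ?_ hnonpos)
  field_simp

end BesselJ

section BesselJDerivProd

/-- The product `J_ν′ J_{ν+1}′`, whose sign changes locate the zeroes of its two factors relative
to each other. -/
noncomputable def besselJDerivProd (ν z : ℝ) : ℝ :=
  deriv (besselJ ν) z * deriv (besselJ (ν + 1)) z

variable {ν z : ℝ}

theorem hasDerivAt_besselJDerivProd_of_deriv_eq_zero (hz : 0 < z)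
    (h : deriv (besselJ ν) z = 0) :
    HasDerivAt (besselJDerivProd ν)
      (-((1 - ν ^ 2 / z ^ 2) * (1 - ν * (ν + 1) / z ^ 2) * besselJ ν z ^ 2)) z := by
  have hJ : besselJ (ν + 1) z = ν / z * besselJ ν z := by
    linarith [(hasDerivAt_besselJ ν hz).deriv]
  refine ((hasDerivAt_deriv_besselJ ν hz).mul
    (hasDerivAt_deriv_besselJ (ν + 1) hz)).congr_deriv ?_
  rw [h, (hasDerivAt_besselJ_add_one ν hz).deriv, hJ]
  field_simp
  ring

theorem hasDerivAt_besselJDerivProd_of_deriv_add_one_eq_zero (hz : 0 < z)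
    (h : deriv (besselJ (ν + 1)) z = 0) :
    HasDerivAt (besselJDerivProd ν)
      ((1 - (ν + 1) ^ 2 / z ^ 2) * (1 - ν * (ν + 1) / z ^ 2) * besselJ (ν + 1) z ^ 2) z := by
  have hJ : besselJ ν z = (ν + 1) / z * besselJ (ν + 1) z := by
    linarith [(hasDerivAt_besselJ_add_one ν hz).deriv]
  refine ((hasDerivAt_deriv_besselJ ν hz).mul
    (hasDerivAt_deriv_besselJ (ν + 1) hz)).congr_deriv ?_
  rw [h, (hasDerivAt_besselJ ν hz).deriv, hJ]
  field_simp
  ring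

theorem eventually_besselJDerivProd_pos_and_neg_of_deriv_eq_zero (hν : 0 ≤ ν) (hz : 0 < z)
    (h : deriv (besselJ ν) z = 0) :
    (∀ᶠ x in 𝓝[<] z, 0 < besselJDerivProd ν x) ∧ ∀ᶠ x in 𝓝[>] z, besselJDerivProd ν x < 0 := by
  have hν' : -1 < ν := neg_one_lt_zero.trans_le hν
  have hJ := besselJ_ne_zero_of_deriv_eq_zero hν' hz h
  have hlt := mul_add_one_lt_sq_of_deriv_besselJ_eq_zero hν' hz h
  have h1 : 0 < 1 - ν * (ν + 1) / z ^ 2 := sub_pos.2 ((div_lt_one (by positivity)).2 hlt)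
  have h2 : 0 < 1 - ν ^ 2 / z ^ 2 := sub_pos.2 ((div_lt_one (by positivity)).2 (by linarith))
  exact eventually_pos_and_eventually_neg_of_hasDerivAt_neg
    (hasDerivAt_besselJDerivProd_of_deriv_eq_zero hz h) (neg_neg_of_pos (by positivity))
    (by rw [besselJDerivProd, h, zero_mul])

theorem eventually_besselJDerivProd_neg_and_pos_of_deriv_add_one_eq_zero (hν : 0 ≤ ν)
    (hz : 0 < z) (h : deriv (besselJ (ν + 1)) z = 0) :
    (∀ᶠ x in 𝓝[<] z, besselJDerivProd ν x < 0) ∧ ∀ᶠ x in 𝓝[>] z, 0 < besselJDerivProd ν x := by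
  have hν' : -1 < ν + 1 := by linarith
  have hJ := besselJ_ne_zero_of_deriv_eq_zero hν' hz h
  have hlt := mul_add_one_lt_sq_of_deriv_besselJ_eq_zero hν' hz h
  have h1 : 0 < 1 - ν * (ν + 1) / z ^ 2 :=
    sub_pos.2 ((div_lt_one (by positivity)).2 (by linarith))
  have h2 : 0 < 1 - (ν + 1) ^ 2 / z ^ 2 :=
    sub_pos.2 ((div_lt_one (by positivity)).2 (by linarith))
  exact eventually_neg_and_eventually_pos_of_hasDerivAt_pos
    (hasDerivAt_besselJDerivProd_of_deriv_add_one_eq_zero hz h) (by positivity)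
    (by rw [besselJDerivProd, h, mul_zero])

theorem continuousOn_besselJDerivProd (ν : ℝ) : ContinuousOn (besselJDerivProd ν) (Ioi 0) :=
  fun _ hz => ((hasDerivAt_deriv_besselJ ν hz).mul
    (hasDerivAt_deriv_besselJ (ν + 1) hz)).continuousAt.continuousWithinAt

theorem eventually_besselJDerivProd_pos (hν : 0 < ν) :
    ∀ᶠ x in 𝓝[>] 0, 0 < besselJDerivProd ν x := by
  filter_upwards [eventually_deriv_besselJ_pos hν,
    eventually_deriv_besselJ_pos (ν := ν + 1) (by linarith)] with x using mul_pos

theorem eventually_besselJDerivProd_zero_neg : ∀ᶠ x in 𝓝[>] 0, besselJDerivProd 0 x < 0 := by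
  filter_upwards [eventually_besselJ_pos (ν := 0 + 1) (by norm_num),
    eventually_deriv_besselJ_pos (ν := 0 + 1) (by norm_num),
    self_mem_nhdsWithin] with x hJ hJ' hx
  rw [besselJDerivProd, (hasDerivAt_besselJ 0 hx).deriv, zero_div, zero_mul, zero_sub]
  exact mul_neg_of_neg_of_pos (neg_neg_of_pos hJ) hJ'

end BesselJDerivProd

section BesselJDerivZeros

variable {ν p q z : ℝ}

theorem pos_of_mem_besselJDerivZeros (hν : ν ≠ 0) (hz : z ∈ besselJDerivZeros ν) : 0 < z :=
  hz.1.resolve_right fun h => hν h.1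

theorem nonneg_of_mem_besselJDerivZeros (hz : z ∈ besselJDerivZeros ν) : 0 ≤ z :=
  hz.1.elim le_of_lt fun h => h.2.ge

theorem zero_mem_besselJDerivZeros_zero : 0 ∈ besselJDerivZeros 0 :=
  ⟨.inr ⟨rfl, rfl⟩, deriv_besselJ_zero_zero⟩

theorem mem_besselJDerivZeros_or_of_besselJDerivProd_eq_zero (hz : 0 < z)
    (h : besselJDerivProd ν z = 0) :
    z ∈ besselJDerivZeros ν ∨ z ∈ besselJDerivZeros (ν + 1) :=
  (mul_eq_zero.1 h).imp (⟨.inl hz, ·⟩) (⟨.inl hz, ·⟩)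

theorem eventually_besselJDerivProd_neg_of_mem (hν : 0 ≤ ν) (hz : z ∈ besselJDerivZeros ν) :
    ∀ᶠ x in 𝓝[>] z, besselJDerivProd ν x < 0 := by
  obtain ⟨hz | ⟨rfl, rfl⟩, h⟩ := hz
  · exact (eventually_besselJDerivProd_pos_and_neg_of_deriv_eq_zero hν hz h).2
  · exact eventually_besselJDerivProd_zero_neg

theorem exists_mem_Ioo_mem_besselJDerivZeros_add_one (hν : 0 ≤ ν)
    (hp : p ∈ besselJDerivZeros ν) (hq : q ∈ besselJDerivZeros ν) (hpq : p < q)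
    (hgap : ∀ z ∈ Ioo p q, z ∉ besselJDerivZeros ν) :
    ∃ z ∈ Ioo p q, z ∈ besselJDerivZeros (ν + 1) := by
  have hp0 : 0 ≤ p := nonneg_of_mem_besselJDerivZeros hp
  obtain ⟨z, hz, hPz⟩ := exists_mem_Ioo_eq_zero_of_eventually_neg_of_eventually_pos hpq
    ((continuousOn_besselJDerivProd ν).mono fun x hx => hp0.trans_lt hx.1)
    (eventually_besselJDerivProd_neg_of_mem hν hp)
    (eventually_besselJDerivProd_pos_and_neg_of_deriv_eq_zero hν (hp0.trans_lt hpq) hq.2).1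
  exact ⟨z, hz, (mem_besselJDerivZeros_or_of_besselJDerivProd_eq_zero
    (hp0.trans_lt hz.1) hPz).resolve_left (hgap z hz)⟩

theorem exists_mem_Ioo_mem_besselJDerivZeros (hν : 0 ≤ ν)
    (hp : p ∈ besselJDerivZeros (ν + 1)) (hq : q ∈ besselJDerivZeros (ν + 1)) (hpq : p < q)
    (hgap : ∀ z ∈ Ioo p q, z ∉ besselJDerivZeros (ν + 1)) :
    ∃ z ∈ Ioo p q, z ∈ besselJDerivZeros ν := by
  have hp0 : 0 < p := pos_of_mem_besselJDerivZeros (by positivity) hp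
  obtain ⟨z, hz, hPz⟩ := exists_mem_Ioo_eq_zero_of_eventually_pos_of_eventually_neg hpq
    ((continuousOn_besselJDerivProd ν).mono fun x hx => hp0.trans hx.1)
    (eventually_besselJDerivProd_neg_and_pos_of_deriv_add_one_eq_zero hν hp0 hp.2).2
    (eventually_besselJDerivProd_neg_and_pos_of_deriv_add_one_eq_zero hν (hp0.trans hpq) hq.2).1
  exact ⟨z, hz, (mem_besselJDerivZeros_or_of_besselJDerivProd_eq_zero
    (hp0.trans hz.1) hPz).resolve_right (hgap z hz)⟩

theorem exists_lt_mem_besselJDerivZeros (hν : 0 ≤ ν) (hq : q ∈ besselJDerivZeros (ν + 1))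
    (hmin : ∀ z ∈ besselJDerivZeros (ν + 1), q ≤ z) : ∃ z < q, z ∈ besselJDerivZeros ν := by
  have hq0 : 0 < q := pos_of_mem_besselJDerivZeros (by positivity) hq
  rcases hν.eq_or_lt with rfl | hν'
  · exact ⟨0, hq0, zero_mem_besselJDerivZeros_zero⟩
  obtain ⟨z, hz, hPz⟩ := exists_mem_Ioo_eq_zero_of_eventually_pos_of_eventually_neg hq0
    ((continuousOn_besselJDerivProd ν).mono Ioo_subset_Ioi_self)
    (eventually_besselJDerivProd_pos hν')
    (eventually_besselJDerivProd_neg_and_pos_of_deriv_add_one_eq_zero hν hq0 hq.2).1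
  exact ⟨z, hz.2, (mem_besselJDerivZeros_or_of_besselJDerivProd_eq_zero hz.1 hPz).resolve_right
    fun h => (hmin z h).not_gt hz.2⟩

end BesselJDerivZeros

namespace EnumBesselJDerivZeros

variable {ν : ℝ} {x : ℕ → ℝ}

theorem apply_mem (hx : EnumBesselJDerivZeros ν x) {k : ℕ} (hk : 1 ≤ k) :
    x k ∈ besselJDerivZeros ν :=
  hx.2.1 k hk

theorem apply_one_le (hx : EnumBesselJDerivZeros ν x) {z : ℝ} (hz : z ∈ besselJDerivZeros ν) :
    x 1 ≤ z := by
  obtain ⟨k, hk, rfl⟩ := hx.2.2 z hz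
  exact hx.1.monotoneOn self_mem_Ici hk hk

theorem notMem_of_mem_Ioo (hx : EnumBesselJDerivZeros ν x) {k : ℕ} (hk : 1 ≤ k) {z : ℝ}
    (hz : z ∈ Ioo (x k) (x (k + 1))) : z ∉ besselJDerivZeros ν := by
  intro h
  obtain ⟨j, hj, rfl⟩ := hx.2.2 z h
  have hkj : k < j := (hx.1.lt_iff_lt hk hj).1 hz.1
  have hjk : j < k + 1 := (hx.1.lt_iff_lt hj (hk.trans k.le_succ)).1 hz.2
  lia

theorem lt_succ (hx : EnumBesselJDerivZeros ν x) {k : ℕ} (hk : 1 ≤ k) : x k < x (k + 1) :=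
  hx.1 hk (hk.trans k.le_succ) k.lt_succ_self

theorem exists_apply_mem (hx : EnumBesselJDerivZeros ν x) {s : Set ℝ}
    (hs : ∃ z ∈ s, z ∈ besselJDerivZeros ν) : ∃ k, 1 ≤ k ∧ x k ∈ s := by
  obtain ⟨z, hzs, hz⟩ := hs
  obtain ⟨k, hk, rfl⟩ := hx.2.2 z hz
  exact ⟨k, hk, hzs⟩

end EnumBesselJDerivZeros

theorem stmt19_general {ν : ℝ} (hν : 0 ≤ ν) {x y : ℕ → ℝ} (hx : EnumBesselJDerivZeros ν x)
    (hy : EnumBesselJDerivZeros (ν + 1) y) {k : ℕ} (hk : 1 ≤ k) :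
    x k < y k ∧ y k < x (k + 1) := by
  refine lt_and_lt_succ_of_exists_between hx.1 hy.1 (fun i hi => hy.exists_apply_mem ?_)
    (fun i hi => hx.exists_apply_mem ?_) (hx.exists_apply_mem (s := Iio (y 1)) ?_) hk
  · exact exists_mem_Ioo_mem_besselJDerivZeros_add_one hν (hx.apply_mem hi)
      (hx.apply_mem (hi.trans i.le_succ)) (hx.lt_succ hi) fun _ => hx.notMem_of_mem_Ioo hi
  · exact exists_mem_Ioo_mem_besselJDerivZeros hν (hy.apply_mem hi)
      (hy.apply_mem (hi.trans i.le_succ)) (hy.lt_succ hi) fun _ => hy.notMem_of_mem_Ioo hi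
  · exact exists_lt_mem_besselJDerivZeros hν (hy.apply_mem le_rfl) fun _ => hy.apply_one_le

/-- For `ν ≥ 1` and every `k ≥ 1`, `j′_{ν,k+1} < j′_{ν−1,k+2} < j′_{ν,k+2}`, where `j′_{μ,k}` is
the `k`-th positive zero of `J_μ′`, with the convention `j′_{0,1} = 0` for the order `μ = 0`. -/
theorem stmt19 (ν : ℝ) (hν : 1 ≤ ν) (k : ℕ) (hk : 1 ≤ k)
    (jpm1 jpn : ℕ → ℝ)
    (hjpm1 : EnumBesselJDerivZeros (ν - 1) jpm1)
    (hjpn : EnumBesselJDerivZeros ν jpn) :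
    jpn (k + 1) < jpm1 (k + 2) ∧ jpm1 (k + 2) < jpn (k + 2) := by
  rw [← sub_add_cancel ν 1] at hjpn
  exact ⟨(stmt19_general (sub_nonneg.2 hν) hjpm1 hjpn le_add_self).2,
    (stmt19_general (sub_nonneg.2 hν) hjpm1 hjpn (by lia)).1⟩
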